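/- arXiv:math/0701265 — 2 statements merged into one kernel-verified Lean document; each statement's English description precedes it below -/
import Mathlib

section
/- Let K > 0, τ > 0, α ≥ 2, β > 0, and let c : ℤ → ℂ satisfy |c_n| ≤ β/(|n|+1)^α for all n together with the equations i n c_n = -(K/τ) Σ_{k=0}^∞ ((-1)^k/(2k+1)!) (c^{*(2k+1)})_n e^{-inτ} for all n ∈ ℤ. Then there exists β' > 0 such that |c_n| ≤ β'/(|n|+1)^{α+1} for all n ∈ ℤ. -/
open scoped Real
open Complex Filter

/-- Convolution of two two-sided sequences of complex numbers. -/
noncomputable def conv (x y : ℤ → ℂ) : ℤ → ℂ := fun n => ∑' k : ℤ, x k * y (n - k)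

/-- `convPow x k` is the `k`-fold convolution power `x^{*k}`;
`x^{*0}` is the unit (Kronecker delta at `0`). -/
noncomputable def convPow (x : ℤ → ℂ) : ℕ → ℤ → ℂ
  | 0 => fun n => if n = 0 then 1 else 0
  | k + 1 => conv (convPow x k) x

/-- Membership in `X_β`: decay `|x_n| ≤ β/(|n|+1)^2` and the symmetry `x_{-n} = conj x_n`. -/
def memX (β : ℝ) (x : ℤ → ℂ) : Prop :=
  (∀ n : ℤ, ‖x n‖ ≤ β / (|(n : ℝ)| + 1) ^ 2) ∧ (∀ n : ℤ, x (-n) = starRingEnd ℂ (x n))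

noncomputable def wt (α : ℝ) (n : ℤ) : ℝ := 1 / (|(n : ℝ)| + 1) ^ α

lemma wt_pos (α : ℝ) (n : ℤ) : 0 < wt α n := by
  unfold wt; positivity

lemma wt_summable (α : ℝ) (hα : 2 ≤ α) : Summable (wt α) := by
  have h : Summable (fun n : ℕ => 1 / ((n : ℝ) + 1) ^ α) := by
    have := (Real.summable_one_div_nat_rpow (p := α)).2 (by linarith)
    have h2 := (summable_nat_add_iff 1).2 this
    simpa using h2
  apply Summable.of_nat_of_neg
  · simpa [wt] using h
  · simpa [wt] using h

lemma wt_half (α : ℝ) (hα : 2 ≤ α) (n k : ℤ) (h : |(n : ℝ)| + 1 ≤ 2 * (|(k : ℝ)| + 1)) :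
    wt α k ≤ 2 ^ α * wt α n := by
  unfold wt
  rw [mul_one_div, div_le_div_iff₀ (by positivity) (by positivity), one_mul,
    ← Real.mul_rpow (by norm_num) (by positivity)]
  exact Real.rpow_le_rpow (by positivity) h (by linarith)

lemma wt_mul (α : ℝ) (hα : 2 ≤ α) (n k : ℤ) :
    wt α k * wt α (n - k) ≤ 2 ^ α * wt α n * (wt α k + wt α (n - k)) := by
  have h1 := wt_pos α k
  have h2 := wt_pos α (n - k)
  have h3 : 0 < 2 ^ α * wt α n := mul_pos (by positivity) (wt_pos α n)
  have ht : |(n : ℝ)| ≤ |(k : ℝ)| + |((n - k : ℤ) : ℝ)| := by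
    have := abs_add_le (k : ℝ) ((n - k : ℤ) : ℝ)
    simpa using this
  rcases le_total (|(k : ℝ)|) (|((n - k : ℤ) : ℝ)|) with h | h
  · have := wt_half α hα n (n - k) (by linarith)
    nlinarith
  · have := wt_half α hα n k (by linarith)
    nlinarith

lemma conv_bound (α : ℝ) (hα : 2 ≤ α) (x y : ℤ → ℂ) (A B : ℝ) (hA : 0 ≤ A) (hB : 0 ≤ B)
    (hx : ∀ n, ‖x n‖ ≤ A * wt α n) (hy : ∀ n, ‖y n‖ ≤ B * wt α n) (n : ℤ) :
    ‖conv x y n‖ ≤ A * (B * (2 ^ α * (2 * ∑' k, wt α k))) * wt α n := by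
  have hs := wt_summable α hα
  have hs1 := hs.hasSum
  have hs2 : HasSum (fun k => wt α (n - k)) (∑' k, wt α k) := by
    have h := (Equiv.hasSum_iff (Equiv.subLeft n) (f := wt α)).2 hs1
    have e : (wt α ∘ (Equiv.subLeft n)) = fun k => wt α (n - k) := by
      funext k; simp
    rwa [e] at h
  have hs3 := (hs1.add hs2).mul_left (A * B * (2 ^ α * wt α n))
  have hb : ∀ k, ‖x k * y (n - k)‖ ≤
      A * B * (2 ^ α * wt α n) * (wt α k + wt α (n - k)) := fun k => by
    rw [norm_mul]
    have e1 : ‖x k‖ * ‖y (n - k)‖ ≤ (A * wt α k) * (B * wt α (n - k)) :=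
      mul_le_mul (hx k) (hy _) (norm_nonneg _) (mul_nonneg hA (wt_pos α k).le)
    have e2 := mul_le_mul_of_nonneg_left (wt_mul α hα n k) (mul_nonneg hA hB)
    linarith
  have h5 := tsum_of_norm_bounded hs3 hb
  have h6 : A * B * (2 ^ α * wt α n) * (∑' k, wt α k + ∑' k, wt α k)
      = A * (B * (2 ^ α * (2 * ∑' k, wt α k))) * wt α n := by ring
  rw [h6] at h5
  exact h5

lemma convPow_bound (α : ℝ) (hα : 2 ≤ α) (c : ℤ → ℂ) (B : ℝ) (hB : 0 ≤ B)
    (hc : ∀ n, ‖c n‖ ≤ B * wt α n) (m : ℕ) (n : ℤ) :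
    ‖convPow c m n‖ ≤ (B * (2 ^ α * (2 * ∑' k, wt α k))) ^ m * wt α n := by
  have hS : 0 ≤ ∑' k, wt α k := tsum_nonneg fun k => (wt_pos α k).le
  induction m generalizing n with
  | zero =>
    by_cases h : n = 0
    · subst h; simp [convPow, wt]
    · simpa [convPow, h] using (wt_pos α n).le
  | succ m ih =>
    have := conv_bound α hα (convPow c m) c _ B (by positivity) hB ih hc n
    rw [pow_succ]
    exact this

/-- Lemma `lem:zwiwykl`: a solution of the Fourier equations with decay of
order `α ≥ 2` has decay of order `α + 1`. -/
theorem decay_improvement (K τ α β : ℝ) (hK : 0 < K) (hτ : 0 < τ) (hα : 2 ≤ α) (hβ : 0 < β)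
    (c : ℤ → ℂ) (hc : ∀ n : ℤ, ‖c n‖ ≤ β / (|(n : ℝ)| + 1) ^ α)
    (heq : ∀ n : ℤ, Complex.I * n * c n =
      -((K / τ : ℝ) : ℂ) *
        ∑' k : ℕ, ((-1) ^ k / (Nat.factorial (2 * k + 1) : ℂ)) * convPow c (2 * k + 1) n *
          Complex.exp (-(Complex.I * n * τ))) :
    ∃ β' > 0, ∀ n : ℤ, ‖c n‖ ≤ β' / (|(n : ℝ)| + 1) ^ (α + 1) := by
  have hc' : ∀ n, ‖c n‖ ≤ β * wt α n := fun n => by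
    have := hc n
    rwa [wt, mul_one_div]
  have hS : 0 ≤ ∑' k, wt α k := tsum_nonneg fun k => (wt_pos α k).le
  have hP := convPow_bound α hα c β hβ.le hc'
  set M := β * (2 ^ α * (2 * ∑' k, wt α k)) with hM
  have hM0 : 0 ≤ M := by positivity
  have hsum : Summable (fun k : ℕ => M ^ (2 * k + 1) / ((2 * k + 1).factorial : ℝ)) :=
    (Real.summable_pow_div_factorial M).comp_injective (i := fun k : ℕ => 2 * k + 1)
      (fun a b h => by simpa using h)
  set E := ∑' k : ℕ, M ^ (2 * k + 1) / ((2 * k + 1).factorial : ℝ) with hE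
  have hE0 : 0 ≤ E := tsum_nonneg fun k => by positivity
  have hKt : 0 < K / τ := div_pos hK hτ
  refine ⟨K / τ * E + β, by positivity, fun n => ?_⟩
  have key : |(n : ℝ)| * ‖c n‖ ≤ K / τ * (E * wt α n) := by
    have h1 := congrArg norm (heq n)
    have hb := tsum_of_norm_bounded (f := fun k : ℕ => ((-1) ^ k / (Nat.factorial (2 * k + 1) : ℂ)) *
        convPow c (2 * k + 1) n * Complex.exp (-(Complex.I * n * τ)))
      (hsum.hasSum.mul_right (wt α n)) (fun k => by
        have he : ‖Complex.exp (-(Complex.I * n * τ))‖ = 1 := by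
          rw [Complex.norm_exp]; simp
        rw [norm_mul, norm_mul, he, mul_one, norm_div, norm_pow, norm_neg, norm_one, one_pow,
          Complex.norm_natCast]
        calc _ ≤ 1 / ((2 * k + 1).factorial : ℝ) * (M ^ (2 * k + 1) * wt α n) :=
              mul_le_mul_of_nonneg_left (hP _ n) (by positivity)
          _ = _ := by ring)
    rw [norm_mul, norm_mul, norm_mul, Complex.norm_I, one_mul, norm_neg, Complex.norm_real,
      Complex.norm_intCast, Real.norm_of_nonneg hKt.le] at h1
    rw [h1]
    exact mul_le_mul_of_nonneg_left hb hKt.le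
  have hpos : 0 < |(n : ℝ)| + 1 := by positivity
  rw [Real.rpow_add hpos, Real.rpow_one, ← div_div, le_div_iff₀ hpos]
  have := hc' n
  have h2 : (K / τ * E + β) / (|(n : ℝ)| + 1) ^ α = (K / τ * E + β) * wt α n := by
    rw [wt, mul_one_div]
  rw [h2]
  linarith
end

section
/- Let K > 0 and β > 0. The map F : ℝ × X_β → ℂ^ℤ defined componentwise by F(τ,c)_n := i n τ e^{inτ} c_n + K Σ_{k=0}^∞ ((-1)^k/(2k+1)!) (c^{*(2k+1)})_n is well defined and continuous, where X_β and ℂ^ℤ carry the product (componentwise) topology. -/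
open scoped Real
open Complex Filter

/-- The map `F(τ,c)_n = i n τ e^{inτ} c_n + K Σ_k ((-1)^k/(2k+1)!) (c^{*(2k+1)})_n`. -/
noncomputable def Fmap (K τ : ℝ) (c : ℤ → ℂ) : ℤ → ℂ := fun n =>
  Complex.I * n * τ * Complex.exp (Complex.I * n * τ) * c n +
    K * ∑' k : ℕ, ((-1) ^ k / (Nat.factorial (2 * k + 1) : ℂ)) * convPow c (2 * k + 1) n

noncomputable def bX (β : ℝ) (n : ℤ) : ℝ := β / (|(n : ℝ)| + 1) ^ 2

lemma bX_summable (β : ℝ) : Summable (bX β) := by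
  have h : Summable (fun n : ℕ => β / ((n : ℝ) + 1) ^ 2) := by
    have h1 : Summable (fun n : ℕ => 1 / (n : ℝ) ^ 2) :=
      Real.summable_one_div_nat_pow.2 (by norm_num)
    have h2 := ((summable_nat_add_iff 1).2 h1).mul_left β
    refine h2.congr fun n => ?_
    push_cast
    ring
  rw [summable_int_iff_summable_nat_and_neg]
  constructor
  · refine h.congr fun n => ?_
    simp [bX]
  · refine h.congr fun n => ?_
    simp [bX]

lemma bX_shift (β : ℝ) (n : ℤ) : HasSum (fun k : ℤ => bX β (n - k)) (∑' k, bX β k) := by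
  have h := (Equiv.hasSum_iff (Equiv.subLeft n) (f := bX β) (a := ∑' k, bX β k)).2
    (bX_summable β).hasSum
  have e : (bX β ∘ (Equiv.subLeft n)) = fun k : ℤ => bX β (n - k) := by
    funext k
    simp only [Function.comp_apply, Equiv.subLeft_apply]
  rw [e] at h
  exact h

lemma bX_tsum_nonneg {β : ℝ} (hβ : 0 < β) : 0 ≤ ∑' k, bX β k :=
  tsum_nonneg fun n => by unfold bX; positivity

lemma term_bound {β : ℝ} (hβ : 0 < β) {c : ℤ → ℂ} (hc : memX β c) (k : ℕ) (n j : ℤ)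
    (h : ‖convPow c k j‖ ≤ (∑' k, bX β k) ^ k) :
    ‖convPow c k j * c (n - j)‖ ≤ (∑' k, bX β k) ^ k * bX β (n - j) := by
  rw [norm_mul]
  exact mul_le_mul h (hc.1 _) (norm_nonneg _) (pow_nonneg (bX_tsum_nonneg hβ) _)

lemma convPow_bound_s10 {β : ℝ} (hβ : 0 < β) {c : ℤ → ℂ} (hc : memX β c) (k : ℕ) :
    ∀ n : ℤ, ‖convPow c k n‖ ≤ (∑' k, bX β k) ^ k := by
  induction k with
  | zero =>
    intro n
    by_cases h : n = 0 <;> simp [convPow, h]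
  | succ k ih =>
    intro n
    rw [pow_succ]
    exact tsum_of_norm_bounded ((bX_shift β n).mul_left _)
      fun j => term_bound hβ hc k n j (ih j)

lemma convPow_continuous {β : ℝ} (hβ : 0 < β) (k : ℕ) :
    ∀ n : ℤ, Continuous (fun x : {x : ℤ → ℂ // memX β x} => convPow x.val k n) := by
  induction k with
  | zero => intro n; exact continuous_const
  | succ k ih =>
    intro n
    refine continuous_tsum (u := fun j => (∑' k, bX β k) ^ k * bX β (n - j)) (fun j => ?_)
      ((bX_shift β n).mul_left _).summable
      (fun j x => term_bound hβ x.2 k n j (convPow_bound_s10 hβ x.2 k j))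
    exact (ih j).mul ((continuous_apply (n - j)).comp continuous_subtype_val)

lemma outer_bound {β : ℝ} (hβ : 0 < β) {c : ℤ → ℂ} (hc : memX β c) (n : ℤ) (k : ℕ) :
    ‖((-1) ^ k / (Nat.factorial (2 * k + 1) : ℂ)) * convPow c (2 * k + 1) n‖ ≤
      (∑' k, bX β k) ^ (2 * k + 1) / (Nat.factorial (2 * k + 1) : ℝ) := by
  rw [norm_mul, norm_div, norm_pow, norm_neg, norm_one, one_pow, Complex.norm_natCast,
    one_div_mul_eq_div]
  gcongr
  exact convPow_bound_s10 hβ hc _ n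

lemma outer_summable (S : ℝ) :
    Summable (fun k : ℕ => S ^ (2 * k + 1) / (Nat.factorial (2 * k + 1) : ℝ)) :=
  (Real.summable_pow_div_factorial S).comp_injective
    (i := fun k : ℕ => 2 * k + 1) (fun a b h => by simp at h; omega)

/-- `F` is well defined (the series converge absolutely on `X_β`) and is
continuous as a map `ℝ × X_β → ℂ^ℤ` in the product topologies. -/
theorem Fmap_well_defined_and_continuous (K β : ℝ) (hK : 0 < K) (hβ : 0 < β) :
    (∀ c : ℤ → ℂ, memX β c → ∀ n : ℤ,
      Summable (fun k : ℕ =>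
        ‖((-1) ^ k / (Nat.factorial (2 * k + 1) : ℂ)) * convPow c (2 * k + 1) n‖)) ∧
    Continuous (fun p : ℝ × {x : ℤ → ℂ // memX β x} => Fmap K p.1 p.2.val) := by
  refine ⟨fun c hc n => Summable.of_nonneg_of_le (fun _ => norm_nonneg _)
    (outer_bound hβ hc n) (outer_summable _), ?_⟩
  refine continuous_pi fun n => ?_
  have h1 : Continuous (fun p : ℝ × {x : ℤ → ℂ // memX β x} => p.2.val n) :=
    (continuous_apply n).comp (continuous_subtype_val.comp continuous_snd)
  have h2 : Continuous (fun p : ℝ × {x : ℤ → ℂ // memX β x} =>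
      ∑' k : ℕ, ((-1) ^ k / (Nat.factorial (2 * k + 1) : ℂ)) * convPow p.2.val (2 * k + 1) n) :=
    continuous_tsum
      (fun k => continuous_const.mul ((convPow_continuous hβ (2 * k + 1) n).comp continuous_snd))
      (outer_summable _) (fun k p => outer_bound hβ p.2.2 n k)
  unfold Fmap
  have h3 : Continuous (fun p : ℝ × {x : ℤ → ℂ // memX β x} => (p.1 : ℂ)) :=
    Complex.continuous_ofReal.comp continuous_fst
  exact (((continuous_const.mul h3).mul
    (Complex.continuous_exp.comp (continuous_const.mul h3))).mul h1).add (continuous_const.mul h2)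
end
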